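/- Let m ≥ 2, x₀ ∈ ℝⁿ, r > 0, j ≥ 1. If x ∈ B(x₀,r) and y ∈ B(x₀, 2^{j+1}r) \ B(x₀, 2^j r), and all derivatives Dᵞ A with |γ| = m−1 belong to BMO(ℝⁿ), then |R_m(A;x,y)| ≤ C |x−y|^{m−1} ( j ∑_{|γ|=m−1} ‖Dᵞ A‖_* + ∑_{|γ|=m−1} |Dᵞ A(y) − (Dᵞ A)_{B(x₀,r)}| ), with C independent of x, y, j, r, A. -/

import Mathlib

open MeasureTheory Metric

/-- Partial derivative `∂/∂xᵢ` of a function on `ℝⁿ`. -/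
noncomputable def pderiv (n : ℕ) (i : Fin n) (f : EuclideanSpace ℝ (Fin n) → ℝ) :
    EuclideanSpace ℝ (Fin n) → ℝ :=
  fun x => fderiv ℝ f x (EuclideanSpace.single i 1)

/-- The multi-index derivative `D^γ f = ∂^{γ₁}_{x₁} ⋯ ∂^{γₙ}_{xₙ} f`. -/
noncomputable def mderiv (n : ℕ) (γ : Fin n → ℕ)
    (f : EuclideanSpace ℝ (Fin n) → ℝ) : EuclideanSpace ℝ (Fin n) → ℝ :=
  (List.finRange n).foldr (fun i g => (pderiv n i)^[γ i] g) f

/-- The `m`-th order Taylor remainder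
`R_m(A;x,y) = A(x) - ∑_{|γ|<m} (1/γ!) D^γ A(y) (x-y)^γ`. -/
noncomputable def taylorRem (n m : ℕ) (A : EuclideanSpace ℝ (Fin n) → ℝ)
    (x y : EuclideanSpace ℝ (Fin n)) : ℝ :=
  A x - ∑ γ : Fin n → Fin m,
    if (∑ i, (γ i : ℕ)) < m then
      (∏ i, (Nat.factorial (γ i) : ℝ))⁻¹ *
        mderiv n (fun i => (γ i : ℕ)) A y * ∏ i, (x i - y i) ^ (γ i : ℕ)
    else 0

/-- The average of `f` over the ball `B(x₀,r)`. -/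
noncomputable def ballAvg (n : ℕ) (f : EuclideanSpace ℝ (Fin n) → ℝ)
    (x₀ : EuclideanSpace ℝ (Fin n)) (r : ℝ) : ℝ :=
  (volume (ball x₀ r)).toReal⁻¹ * ∫ u in ball x₀ r, f u

/-!
The remainder is controlled by a Taylor expansion in which the derivatives of top order
`k = m - 1` are replaced by their averages over `B(x₀, r)`; putting the true `Dᵞ A(y)` back
costs exactly the second sum. The segment from `x` to `y` is null, so BMO says nothing about the
derivatives on it. Instead both points are joined to an auxiliary point `z`: expanding
about `z` and recombining by the binomial theorem for `∂_{x-y} + ∂_{y-z}` bounds the error by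
the integrals along `[x, z]` and `[y, z]` of the deviations of `Dᵞ A` from the averages.
Averaging over `z` in a ball of radius `R` about an endpoint `p` turns the point at parameter
`t` into an average over `B(p, tR)`, and the average of `|Dᵞ A - (Dᵞ A)_{B(x₀, r)}|` over
`B(p, tR)` is `O(log (1/t) + log (R/r))`, which is integrable in `t` and linear in `j` at the
scale `R ∼ 2^j r`. Some `z` does at least as well as the average.
-/

section PartialDerivatives

variable {n : ℕ} {f : EuclideanSpace ℝ (Fin n) → ℝ}

lemma fderiv_apply_eq_sum_pderiv (f : EuclideanSpace ℝ (Fin n) → ℝ)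
    (u w : EuclideanSpace ℝ (Fin n)) : fderiv ℝ f u w = ∑ i, w i * pderiv n i f u := by
  have hw : w = ∑ i, w i • EuclideanSpace.single i (1 : ℝ) := by
    ext l
    simp [Pi.single_apply]
  conv_lhs => rw [hw]
  simp [pderiv]

lemma contDiff_pderiv {p : ℕ} (i : Fin n) (hf : ContDiff ℝ (p + 1 : ℕ) f) :
    ContDiff ℝ p (pderiv n i f) :=
  (hf.fderiv_right (m := p) (by norm_cast)).clm_apply contDiff_const

lemma pderiv_comm (i l : Fin n) (hf : ContDiff ℝ 2 f) :
    pderiv n i (pderiv n l f) = pderiv n l (pderiv n i f) := by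
  funext x
  have hdiff : Differentiable ℝ (fderiv ℝ f) :=
    (hf.fderiv_right (m := 1) (by norm_num)).differentiable one_ne_zero
  have second_eq (a b : Fin n) : pderiv n a (pderiv n b f) x =
      fderiv ℝ (fderiv ℝ f) x (EuclideanSpace.single a 1) (EuclideanSpace.single b 1) := by
    unfold pderiv
    rw [fderiv_clm_apply (hdiff x) (differentiableAt_const _)]
    simp
  rw [second_eq, second_eq]
  exact hf.contDiffAt.isSymmSndFDerivAt (by simp) _ _

/-- The iterated partial derivative `∂_{l₁} ⋯ ∂_{lₚ} f` along a list of coordinates. On `C^p`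
functions it depends on the list only up to permutation, which makes it easier to handle than
`mderiv`, whose order of differentiation is fixed. -/
noncomputable def iterPderiv (l : List (Fin n)) (f : EuclideanSpace ℝ (Fin n) → ℝ) :
    EuclideanSpace ℝ (Fin n) → ℝ :=
  l.foldr (pderiv n) f

lemma contDiff_iterPderiv (l : List (Fin n)) {p : ℕ} (hf : ContDiff ℝ (p + l.length : ℕ) f) :
    ContDiff ℝ p (iterPderiv l f) := by
  induction l generalizing p with
  | nil => exact hf
  | cons i l ih =>
    refine contDiff_pderiv i (ih ?_)
    rwa [add_assoc, add_comm 1]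

lemma iterPderiv_perm {l l' : List (Fin n)} (h : l.Perm l') (hf : ContDiff ℝ l.length f) :
    iterPderiv l f = iterPderiv l' f := by
  induction h with
  | nil => rfl
  | cons i _ ih =>
    exact congrArg (pderiv n i) (ih (hf.of_le (by exact_mod_cast Nat.le_succ _)))
  | swap i j l =>
    refine pderiv_comm j i (contDiff_iterPderiv l (p := 2) ?_)
    rwa [add_comm]
  | trans h₁ _ ih₁ ih₂ => rw [ih₁ hf, ih₂ (by rwa [← h₁.length_eq])]

/-- The nondecreasing list in which each coordinate `i` occurs `γ i` times. -/
def multiIndexList (γ : Fin n → ℕ) : List (Fin n) :=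
  (List.finRange n).flatMap fun i => List.replicate (γ i) i

lemma count_multiIndexList (γ : Fin n → ℕ) (i : Fin n) :
    (multiIndexList γ).count i = γ i := by
  simp [multiIndexList, List.count_flatMap, List.count_replicate, Function.comp_def,
    ← Fin.sum_univ_def]

lemma length_multiIndexList (γ : Fin n → ℕ) : (multiIndexList γ).length = ∑ i, γ i := by
  simp [multiIndexList, List.length_flatMap, Fin.sum_univ_def]

lemma mderiv_eq_iterPderiv (γ : Fin n → ℕ) (f : EuclideanSpace ℝ (Fin n) → ℝ) :
    mderiv n γ f = iterPderiv (multiIndexList γ) f := by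
  have foldr_replicate (i : Fin n) (q : ℕ) (g : EuclideanSpace ℝ (Fin n) → ℝ) :
      (List.replicate q i).foldr (pderiv n) g = (pderiv n i)^[q] g := by
    induction q with
    | zero => rfl
    | succ q ih => rw [List.replicate_succ, List.foldr_cons, ih, Function.iterate_succ_apply']
  simp only [mderiv, iterPderiv, multiIndexList, List.foldr_flatMap, foldr_replicate]

lemma mderiv_zero (f : EuclideanSpace ℝ (Fin n) → ℝ) : mderiv n 0 f = f := by
  have hnil : multiIndexList (0 : Fin n → ℕ) = [] :=
    List.eq_nil_of_length_eq_zero (by simp [length_multiIndexList])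
  rw [mderiv_eq_iterPderiv, hnil, iterPderiv, List.foldr_nil]

lemma contDiff_mderiv (γ : Fin n → ℕ) {p : ℕ} (hf : ContDiff ℝ (p + ∑ i, γ i : ℕ) f) :
    ContDiff ℝ p (mderiv n γ f) := by
  rw [mderiv_eq_iterPderiv]
  exact contDiff_iterPderiv _ (by rwa [length_multiIndexList])

lemma continuous_mderiv (γ : Fin n → ℕ) (hf : ContDiff ℝ (∑ i, γ i : ℕ) f) :
    Continuous (mderiv n γ f) :=
  (contDiff_mderiv γ (p := 0) (by rwa [zero_add])).continuous

lemma pderiv_mderiv (i : Fin n) (γ : Fin n → ℕ) (hf : ContDiff ℝ (∑ l, γ l + 1 : ℕ) f) :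
    pderiv n i (mderiv n γ f) = mderiv n (Pi.single i 1 + γ) f := by
  rw [mderiv_eq_iterPderiv, mderiv_eq_iterPderiv]
  refine iterPderiv_perm (l := i :: multiIndexList γ) (List.perm_iff_count.2 fun l => ?_) ?_
  · rw [List.count_cons, count_multiIndexList, count_multiIndexList, Pi.add_apply,
      Pi.single_apply, add_comm]
    simp only [beq_iff_eq, eq_comm (a := l)]
  · rwa [List.length_cons, length_multiIndexList]

lemma hasDerivAt_mderiv_add_smul (γ : Fin n → ℕ) (hf : ContDiff ℝ (∑ i, γ i + 1 : ℕ) f)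
    (y w : EuclideanSpace ℝ (Fin n)) (t : ℝ) :
    HasDerivAt (fun s : ℝ => mderiv n γ f (y + s • w))
      (∑ i, w i * mderiv n (Pi.single i 1 + γ) f (y + t • w)) t := by
  have hdiff : Differentiable ℝ (mderiv n γ f) :=
    (contDiff_mderiv γ (p := 1) (by rwa [add_comm])).differentiable (by norm_num)
  have hline : HasDerivAt (fun s : ℝ => y + s • w) w t := by
    simpa using ((hasDerivAt_id t).smul_const w).const_add y
  have hcomp := (hdiff (y + t • w)).hasFDerivAt.comp_hasDerivAt t hline
  simp only [fderiv_apply_eq_sum_pderiv, pderiv_mderiv _ γ hf] at hcomp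
  exact hcomp

end PartialDerivatives

section Symbols

open MvPolynomial Finset

variable {ι : Type*}

/-- The linear functional on polynomials with value `c γ` at the monomial `X ^ γ`. -/
noncomputable def monomialFunctional (c : (ι → ℕ) → ℝ) : MvPolynomial ι ℝ →ₗ[ℝ] ℝ :=
  (basisMonomials ι ℝ).constr ℝ fun γ => c γ

lemma monomialFunctional_monomial (c : (ι → ℕ) → ℝ) (γ : ι →₀ ℕ) (a : ℝ) :
    monomialFunctional c (monomial γ a) = a * c γ := by
  have hbasis : monomial γ a = a • basisMonomials ι ℝ γ := by
    rw [coe_basisMonomials, smul_monomial, smul_eq_mul, mul_one]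
  rw [hbasis, map_smul, monomialFunctional, Module.Basis.constr_basis, smul_eq_mul]

lemma monomialFunctional_apply (c : (ι → ℕ) → ℝ) (P : MvPolynomial ι ℝ) :
    monomialFunctional c P = ∑ γ ∈ P.support, P.coeff γ * c γ := by
  conv_lhs => rw [P.as_sum, map_sum]
  simp_rw [monomialFunctional_monomial]

variable [Fintype ι]

lemma monomialFunctional_prod_X_pow (c : (ι → ℕ) → ℝ) (γ : ι → ℕ) :
    monomialFunctional c (∏ i, X i ^ γ i) = c γ := by
  have hprod : ∏ i, (X i : MvPolynomial ι ℝ) ^ γ i =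
      monomial (Finsupp.equivFunOnFinite.symm γ) 1 := by
    rw [monomial_eq, Finsupp.prod_fintype _ _ fun _ => pow_zero _]
    simp
  rw [hprod, monomialFunctional_monomial, one_mul]
  rfl

/-- The symbol `∑ i, vᵢ Xᵢ` of the directional derivative `∂_v`. -/
noncomputable def dirSymbol : EuclideanSpace ℝ ι →ₗ[ℝ] MvPolynomial ι ℝ :=
  Fintype.linearCombination ℝ X ∘ₗ (WithLp.linearEquiv 2 ℝ (ι → ℝ)).toLinearMap

lemma dirSymbol_apply (v : EuclideanSpace ℝ ι) : dirSymbol v = ∑ i, v i • X i := rfl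

lemma totalDegree_dirSymbol_pow_le (v : EuclideanSpace ℝ ι) (a : ℕ) :
    (dirSymbol v ^ a).totalDegree ≤ a := by
  have hone : (dirSymbol v).totalDegree ≤ 1 := by
    rw [dirSymbol_apply]
    refine totalDegree_finsetSum_le fun i _ => (totalDegree_smul_le _ _).trans ?_
    rw [totalDegree_X]
  simpa using (totalDegree_pow _ a).trans (Nat.mul_le_mul_left a hone)

lemma map_dirSymbol_pow_div_factorial [DecidableEq ι] (L : MvPolynomial ι ℝ →ₗ[ℝ] ℝ)
    (v : EuclideanSpace ℝ ι) (d : ℕ) :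
    L (dirSymbol v ^ d) / d.factorial =
      ∑ γ ∈ piAntidiag univ d,
        (∏ i, ((γ i).factorial : ℝ))⁻¹ * L (∏ i, X i ^ γ i) * ∏ i, v i ^ γ i := by
  rw [dirSymbol_apply, sum_pow_eq_sum_piAntidiag, map_sum, sum_div]
  refine sum_congr rfl fun γ hγ => ?_
  have hterm : (Nat.multinomial univ γ : MvPolynomial ι ℝ) * ∏ i, (v i • X i) ^ γ i =
      (Nat.multinomial univ γ * ∏ i, v i ^ γ i : ℝ) • ∏ i, X i ^ γ i := by
    simp only [smul_eq_C_mul, mul_pow, prod_mul_distrib, map_mul, map_natCast, map_prod, map_pow]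
    ring
  have hspec : (∏ i, ((γ i).factorial : ℝ)) * Nat.multinomial univ γ = d.factorial := by
    rw [← (mem_piAntidiag.1 hγ).1]
    exact_mod_cast Nat.multinomial_spec univ γ
  have hprod : (∏ i, ((γ i).factorial : ℝ)) ≠ 0 := by positivity
  have hd : (d.factorial : ℝ) ≠ 0 := by positivity
  rw [hterm, map_smul, smul_eq_mul, div_eq_iff hd, ← hspec]
  field_simp

lemma map_add_pow_div_factorial {S : Type*} [CommRing S] [Algebra ℝ S] (L : S →ₗ[ℝ] ℝ)
    (p q : S) (d : ℕ) :
    L ((p + q) ^ d) / d.factorial =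
      ∑ a ∈ range (d + 1), L (q ^ (d - a) * p ^ a) / (d - a).factorial / a.factorial := by
  rw [add_pow, map_sum, sum_div]
  refine sum_congr rfl fun a ha => ?_
  have had : a ≤ d := Nat.lt_succ_iff.1 (mem_range.1 ha)
  have hterm : p ^ a * q ^ (d - a) * (d.choose a : S) =
      (d.choose a : ℝ) • (q ^ (d - a) * p ^ a) := by
    rw [Algebra.smul_def, map_natCast]
    ring
  have hd : (d.factorial : ℝ) ≠ 0 := by positivity
  rw [hterm, map_smul, smul_eq_mul, Nat.cast_choose ℝ had]
  field_simp

lemma abs_map_prod_dirSymbol_le [DecidableEq ι] (L : MvPolynomial ι ℝ →ₗ[ℝ] ℝ) {R M : ℝ}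
    (vs : List (EuclideanSpace ℝ ι)) (hvs : ∀ v ∈ vs, ‖v‖ ≤ R)
    (hL : ∀ γ ∈ piAntidiag univ vs.length, |L (∏ i, X i ^ γ i)| ≤ M) :
    |L (vs.map dirSymbol).prod| ≤ (Fintype.card ι * R) ^ vs.length * M := by
  induction vs generalizing L with
  | nil => simpa using hL 0
  | cons v vs ih =>
    obtain ⟨hv, hvs⟩ := List.forall_mem_cons.1 hvs
    have hX (i : ι) : |L (X i * (vs.map dirSymbol).prod)| ≤
        (Fintype.card ι * R) ^ vs.length * M := by
      refine ih (L ∘ₗ LinearMap.mulLeft ℝ (X i)) hvs fun γ hγ => ?_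
      have hmul : X i * ∏ l, (X l : MvPolynomial ι ℝ) ^ γ l =
          ∏ l, X l ^ (Pi.single i 1 + γ : ι → ℕ) l := by
        simp only [Pi.add_apply, pow_add, prod_mul_distrib, Pi.single_apply, pow_ite, pow_one,
          pow_zero, prod_ite_eq', mem_univ, if_true]
      have hγ' : (Pi.single i 1 + γ : ι → ℕ) ∈ piAntidiag univ (v :: vs).length := by
        simpa [sum_add_distrib, add_comm 1] using hγ
      simpa only [LinearMap.comp_apply, LinearMap.mulLeft_apply, hmul] using hL _ hγ'
    have hsum : L ((v :: vs).map dirSymbol).prod =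
        ∑ i, v i * L (X i * (vs.map dirSymbol).prod) := by
      rw [List.map_cons, List.prod_cons, dirSymbol_apply, sum_mul, map_sum]
      simp only [smul_mul_assoc, map_smul, smul_eq_mul]
    calc |L ((v :: vs).map dirSymbol).prod|
        ≤ ∑ i, |v i * L (X i * (vs.map dirSymbol).prod)| := hsum ▸ abs_sum_le_sum_abs _ _
      _ ≤ ∑ _i : ι, R * ((Fintype.card ι * R) ^ vs.length * M) := by
          refine sum_le_sum fun i _ => ?_
          rw [abs_mul]
          exact mul_le_mul ((PiLp.norm_apply_le v i).trans hv) (hX i) (abs_nonneg _)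
            ((norm_nonneg v).trans hv)
      _ = (Fintype.card ι * R) ^ (v :: vs).length * M := by
          rw [sum_const, card_univ, nsmul_eq_mul, List.length_cons, pow_succ']
          ring

lemma abs_map_dirSymbol_pow_mul_pow_le [DecidableEq ι] (L : MvPolynomial ι ℝ →ₗ[ℝ] ℝ)
    {v w : EuclideanSpace ℝ ι} {R : ℝ} (hv : ‖v‖ ≤ R) (hw : ‖w‖ ≤ R) (a b : ℕ) :
    |L (dirSymbol v ^ a * dirSymbol w ^ b)| ≤
      (Fintype.card ι * R) ^ (a + b) * ∑ γ ∈ piAntidiag univ (a + b), |L (∏ i, X i ^ γ i)| := by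
  have h := abs_map_prod_dirSymbol_le L (List.replicate a v ++ List.replicate b w) (R := R)
    (M := ∑ γ ∈ piAntidiag univ (a + b), |L (∏ i, X i ^ γ i)|)
  simp only [List.length_append, List.length_replicate, List.map_append, List.map_replicate,
    List.prod_append, List.prod_replicate] at h
  refine h (fun u hu => ?_) fun γ hγ =>
    single_le_sum (f := fun γ => |L (∏ i, X i ^ γ i)|) (fun _ _ => abs_nonneg _) hγ
  rcases List.mem_append.1 hu with hu | hu <;> rwa [List.eq_of_mem_replicate hu]

lemma exists_fin_val_eq_of_mem_piAntidiag [DecidableEq ι] {d m : ℕ} (hd : d < m) {γ : ι → ℕ}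
    (hγ : γ ∈ piAntidiag univ d) : ∃ δ : ι → Fin m, (fun i => (δ i : ℕ)) = γ := by
  have hlt (i : ι) : γ i < m :=
    ((single_le_sum (fun _ _ => Nat.zero_le _) (mem_univ i)).trans_eq
      (mem_piAntidiag.1 hγ).1).trans_lt hd
  exact ⟨fun i => ⟨γ i, hlt i⟩, rfl⟩

lemma sum_ite_sum_eq_sum_piAntidiag {M : Type*} [AddCommMonoid M] [DecidableEq ι] {d m : ℕ}
    (hd : d < m) (f : (ι → ℕ) → M) :
    (∑ γ : ι → Fin m, if ∑ i, (γ i : ℕ) = d then f fun i => γ i else 0) =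
      ∑ γ ∈ piAntidiag univ d, f γ := by
  rw [← sum_filter]
  refine sum_bij (fun γ _ i => (γ i : ℕ)) (fun γ hγ => ?_) (fun γ _ δ _ h => ?_)
    (fun γ hγ => ?_) fun _ _ => rfl
  · simpa using hγ
  · exact funext fun i => Fin.ext (congrFun h i)
  · obtain ⟨δ, rfl⟩ := exists_fin_val_eq_of_mem_piAntidiag hd hγ
    exact ⟨δ, by simpa using hγ, rfl⟩

end Symbols

section DiffOp

open MvPolynomial Finset

variable {n : ℕ} {f : EuclideanSpace ℝ (Fin n) → ℝ}

/-- The value `(P(∂) f)(u)` of a constant-coefficient differential operator, as a functional of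
its symbol `P`. In this form powers of `∂_v` expand by the binomial and multinomial theorems
although `∂_v` is not an endomorphism of `C^k`. -/
noncomputable def diffOpAt (f : EuclideanSpace ℝ (Fin n) → ℝ) (u : EuclideanSpace ℝ (Fin n)) :
    MvPolynomial (Fin n) ℝ →ₗ[ℝ] ℝ :=
  monomialFunctional fun γ => mderiv n γ f u

lemma diffOpAt_one (f : EuclideanSpace ℝ (Fin n) → ℝ) (u : EuclideanSpace ℝ (Fin n)) :
    diffOpAt f u 1 = f u := by
  have h := monomialFunctional_prod_X_pow (fun γ => mderiv n γ f u) 0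
  simpa only [diffOpAt, Pi.zero_apply, pow_zero, prod_const_one, mderiv_zero] using h

lemma continuous_diffOpAt {P : MvPolynomial (Fin n) ℝ} {d : ℕ} (hP : P.totalDegree ≤ d)
    (hf : ContDiff ℝ d f) : Continuous fun u => diffOpAt f u P := by
  simp only [diffOpAt, monomialFunctional_apply]
  refine continuous_finsetSum _ fun γ hγ => continuous_const.mul (continuous_mderiv γ ?_)
  have hγd : ∑ i, γ i ≤ d := by
    simpa [Finsupp.sum_fintype] using (le_totalDegree hγ).trans hP
  exact hf.of_le (by exact_mod_cast hγd)

lemma hasDerivAt_diffOpAt_add_smul {P : MvPolynomial (Fin n) ℝ} {d : ℕ} (hP : P.totalDegree ≤ d)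
    (hf : ContDiff ℝ (d + 1 : ℕ) f) (y w : EuclideanSpace ℝ (Fin n)) (t : ℝ) :
    HasDerivAt (fun s : ℝ => diffOpAt f (y + s • w) P)
      (diffOpAt f (y + t • w) (dirSymbol w * P)) t := by
  have hmul : diffOpAt f (y + t • w) (dirSymbol w * P) =
      ∑ γ ∈ P.support,
        P.coeff γ * ∑ i, w i * mderiv n (Pi.single i 1 + ⇑γ) f (y + t • w) := by
    conv_lhs => rw [P.as_sum, mul_sum, map_sum]
    refine sum_congr rfl fun γ _ => ?_
    rw [dirSymbol_apply, sum_mul, map_sum, mul_sum]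
    refine sum_congr rfl fun i _ => ?_
    rw [X, smul_monomial, monomial_mul, diffOpAt, monomialFunctional_monomial, Finsupp.coe_add,
      Finsupp.single_eq_pi_single]
    simp only [smul_eq_mul, mul_one]
    ring
  rw [hmul]
  simp only [diffOpAt, monomialFunctional_apply]
  refine HasDerivAt.fun_sum fun γ hγ => (hasDerivAt_mderiv_add_smul γ ?_ y w t).const_mul _
  have hγd : ∑ i, γ i ≤ d := by
    simpa [Finsupp.sum_fintype] using (le_totalDegree hγ).trans hP
  exact hf.of_le (by exact_mod_cast Nat.succ_le_succ hγd)

lemma taylorRem_eq_sub_sum_diffOpAt (f : EuclideanSpace ℝ (Fin n) → ℝ) (m : ℕ)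
    (x y : EuclideanSpace ℝ (Fin n)) :
    taylorRem n m f x y =
      f x - ∑ d ∈ range m, diffOpAt f y (dirSymbol (x - y) ^ d) / d.factorial := by
  have hdeg (d : ℕ) (hd : d ∈ range m) :
      diffOpAt f y (dirSymbol (x - y) ^ d) / d.factorial =
        ∑ γ : Fin n → Fin m, if ∑ i, (γ i : ℕ) = d then
          (∏ i, ((γ i : ℕ).factorial : ℝ))⁻¹ * mderiv n (fun i => (γ i : ℕ)) f y *
            ∏ i, (x i - y i) ^ (γ i : ℕ) else 0 := by
    rw [map_dirSymbol_pow_div_factorial,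
      sum_ite_sum_eq_sum_piAntidiag (mem_range.1 hd) fun γ : Fin n → ℕ =>
        (∏ i, ((γ i).factorial : ℝ))⁻¹ * mderiv n γ f y * ∏ i, (x i - y i) ^ γ i]
    simp only [diffOpAt, monomialFunctional_prod_X_pow, PiLp.sub_apply]
  rw [taylorRem, sum_congr rfl hdeg, sum_comm]
  simp only [sum_ite_eq, mem_range]

end DiffOp

section OneVariable

open Finset

lemma hasDerivAt_sub_pow_div_factorial (x t : ℝ) (b : ℕ) :
    HasDerivAt (fun s : ℝ => (x - s) ^ (b + 1) / (b + 1).factorial)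
      (-((x - t) ^ b / b.factorial)) t := by
  refine ((monomial_has_deriv_aux t x b).div_const _).congr_deriv ?_
  rw [Nat.factorial_succ, Nat.cast_mul, Nat.cast_succ]
  field_simp

lemma hasDerivAt_sum_mul_sub_pow_div_factorial {g : ℕ → ℝ → ℝ} {b : ℕ} {t : ℝ} (x : ℝ)
    (hg : ∀ i ≤ b, HasDerivAt (g i) (g (i + 1) t) t) :
    HasDerivAt (fun s => ∑ i ∈ range (b + 1), g i s * ((x - s) ^ i / i.factorial))
      (g (b + 1) t * ((x - t) ^ b / b.factorial)) t := by
  induction b with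
  | zero => simpa using hg 0 le_rfl
  | succ b ih =>
    simp_rw [sum_range_succ _ (b + 1)]
    have hlast := (hg (b + 1) le_rfl).mul (hasDerivAt_sub_pow_div_factorial x t b)
    refine ((ih fun i hi => hg i (by omega)).add hlast).congr_deriv ?_
    ring

lemma abs_sub_sum_div_factorial_le_integral {g : ℕ → ℝ → ℝ} {b : ℕ}
    (hg : ∀ i ≤ b, ∀ t, HasDerivAt (g i) (g (i + 1) t) t) (hcont : Continuous (g (b + 1)))
    (c : ℝ) :
    |g 0 1 - ∑ i ∈ range (b + 1), g i 0 / i.factorial - c / (b + 1).factorial| ≤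
      ∫ t in (0 : ℝ)..1, |g (b + 1) t - c| := by
  let φ (s : ℝ) : ℝ := ∑ i ∈ range (b + 1), g i s * ((1 - s) ^ i / i.factorial) +
    c * ((1 - s) ^ (b + 1) / (b + 1).factorial)
  have hφ (t : ℝ) : HasDerivAt φ ((g (b + 1) t - c) * ((1 - t) ^ b / b.factorial)) t := by
    refine ((hasDerivAt_sum_mul_sub_pow_div_factorial 1 fun i hi => hg i hi t).add
      ((hasDerivAt_sub_pow_div_factorial 1 t b).const_mul c)).congr_deriv ?_
    ring
  have hφ₀ : φ 0 = ∑ i ∈ range (b + 1), g i 0 / i.factorial + c / (b + 1).factorial := by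
    simp only [φ, sub_zero, one_pow, mul_one_div]
  have hφ₁ : φ 1 = g 0 1 := by
    simp [φ, sum_range_succ']
  have hint : ∫ t in (0 : ℝ)..1, (g (b + 1) t - c) * ((1 - t) ^ b / b.factorial) = φ 1 - φ 0 :=
    intervalIntegral.integral_eq_sub_of_hasDerivAt (fun t _ => hφ t)
      (Continuous.intervalIntegrable (by fun_prop) _ _)
  rw [sub_sub, ← hφ₀, ← hφ₁, ← hint, ← Real.norm_eq_abs]
  refine intervalIntegral.norm_integral_le_of_norm_le zero_le_one
    (Filter.Eventually.of_forall fun t ht => ?_)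
    (Continuous.intervalIntegrable (by fun_prop) _ _)
  have hweight : |(1 - t) ^ b / b.factorial| ≤ 1 := by
    have hpow : (1 - t) ^ b ≤ 1 := pow_le_one₀ (by linarith [ht.2]) (by linarith [ht.1])
    have hfact : (1 : ℝ) ≤ b.factorial := by exact_mod_cast b.factorial_pos
    rw [abs_of_nonneg (div_nonneg (pow_nonneg (by linarith [ht.2]) b) (by positivity))]
    exact div_le_one_of_le₀ (hpow.trans hfact) (by positivity)
  rw [Real.norm_eq_abs, abs_mul]
  exact mul_le_of_le_one_right (abs_nonneg _) hweight

end OneVariable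

section SubstitutedTaylor

open MvPolynomial Finset

variable {n k : ℕ} {f : EuclideanSpace ℝ (Fin n) → ℝ}

/-- The total deviation `∑_{|γ| = k} |Dᵞf(u) - L(Xᵞ)|` at `u` of the derivatives of order `k`
from prescribed values, encoded as a functional `L` on symbols. -/
noncomputable def derivDeviation (f : EuclideanSpace ℝ (Fin n) → ℝ)
    (L : MvPolynomial (Fin n) ℝ →ₗ[ℝ] ℝ) (k : ℕ) (u : EuclideanSpace ℝ (Fin n)) : ℝ :=
  ∑ γ ∈ piAntidiag univ k, |mderiv n γ f u - L (∏ i, X i ^ γ i)|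

lemma continuous_derivDeviation (L : MvPolynomial (Fin n) ℝ →ₗ[ℝ] ℝ) (hf : ContDiff ℝ k f) :
    Continuous (derivDeviation f L k) :=
  continuous_finsetSum _ fun γ hγ =>
    ((continuous_mderiv γ (by rwa [(mem_piAntidiag.1 hγ).1])).sub continuous_const).abs

lemma abs_diffOpAt_dirSymbol_pow_mul_pow_sub_le (f : EuclideanSpace ℝ (Fin n) → ℝ)
    (L : MvPolynomial (Fin n) ℝ →ₗ[ℝ] ℝ) (u : EuclideanSpace ℝ (Fin n))
    {v w : EuclideanSpace ℝ (Fin n)} {R : ℝ} (hv : ‖v‖ ≤ R) (hw : ‖w‖ ≤ R) (a b : ℕ) :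
    |diffOpAt f u (dirSymbol v ^ a * dirSymbol w ^ b) - L (dirSymbol v ^ a * dirSymbol w ^ b)| ≤
      (n * R) ^ (a + b) * derivDeviation f L (a + b) u := by
  have h := abs_map_dirSymbol_pow_mul_pow_le (diffOpAt f u - L) hv hw a b
  simp only [LinearMap.sub_apply, diffOpAt, monomialFunctional_prod_X_pow,
    Fintype.card_fin] at h
  exact h

/-- The error at `y` of the order-`b` Taylor expansion of `P(∂)f` about `z` in which the terms
of top order `b` are not taken from `f` but from the functional `L`. -/
noncomputable def taylorDefect (f : EuclideanSpace ℝ (Fin n) → ℝ)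
    (L : MvPolynomial (Fin n) ℝ →ₗ[ℝ] ℝ) (P : MvPolynomial (Fin n) ℝ) (b : ℕ)
    (y z : EuclideanSpace ℝ (Fin n)) : ℝ :=
  diffOpAt f y P - ∑ i ∈ range b, diffOpAt f z (dirSymbol (y - z) ^ i * P) / i.factorial -
    L (dirSymbol (y - z) ^ b * P) / b.factorial

lemma intervalIntegral_segment_reverse {E : Type*} [AddCommGroup E] [Module ℝ E] (S : E → ℝ)
    (y z : E) :
    ∫ t in (0 : ℝ)..1, S (z + t • (y - z)) = ∫ t in (0 : ℝ)..1, S (y + t • (z - y)) := by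
  have hpoint (t : ℝ) : y + t • (z - y) = z + (1 - t) • (y - z) := by module
  simp_rw [hpoint]
  simpa using (intervalIntegral.integral_comp_sub_left (a := 0) (b := 1)
    (fun t => S (z + t • (y - z))) 1).symm

lemma abs_taylorDefect_dirSymbol_pow_le (L : MvPolynomial (Fin n) ℝ →ₗ[ℝ] ℝ) {a b : ℕ}
    (hb : b ≠ 0) (hf : ContDiff ℝ (b + a : ℕ) f) {v y z : EuclideanSpace ℝ (Fin n)} {R : ℝ}
    (hv : ‖v‖ ≤ R) (hyz : ‖y - z‖ ≤ R) :
    |taylorDefect f L (dirSymbol v ^ a) b y z| ≤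
      (n * R) ^ (b + a) * ∫ t in (0 : ℝ)..1, derivDeviation f L (b + a) (y + t • (z - y)) := by
  obtain ⟨b, rfl⟩ := Nat.exists_eq_succ_of_ne_zero hb
  let g (i : ℕ) (t : ℝ) : ℝ :=
    diffOpAt f (z + t • (y - z)) (dirSymbol (y - z) ^ i * dirSymbol v ^ a)
  have hdeg (i : ℕ) : (dirSymbol (y - z) ^ i * dirSymbol v ^ a).totalDegree ≤ i + a :=
    (totalDegree_mul _ _).trans
      (add_le_add (totalDegree_dirSymbol_pow_le _ i) (totalDegree_dirSymbol_pow_le _ a))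
  have hg (i : ℕ) (hi : i ≤ b) (t : ℝ) : HasDerivAt (g i) (g (i + 1) t) t := by
    have h := hasDerivAt_diffOpAt_add_smul (hdeg i)
      (hf.of_le (by exact_mod_cast (by omega : i + a + 1 ≤ b + 1 + a))) z (y - z) t
    rwa [← mul_assoc, ← pow_succ'] at h
  have hcont : Continuous (g (b + 1)) :=
    (continuous_diffOpAt (hdeg (b + 1)) hf).comp (by fun_prop)
  have hdev : Continuous fun t : ℝ => derivDeviation f L (b + 1 + a) (z + t • (y - z)) :=
    (continuous_derivDeviation L hf).comp (by fun_prop)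
  calc |taylorDefect f L (dirSymbol v ^ a) (b + 1) y z|
      ≤ ∫ t in (0 : ℝ)..1, |g (b + 1) t - L (dirSymbol (y - z) ^ (b + 1) * dirSymbol v ^ a)| := by
        simpa [g, taylorDefect] using abs_sub_sum_div_factorial_le_integral hg hcont
          (L (dirSymbol (y - z) ^ (b + 1) * dirSymbol v ^ a))
    _ ≤ ∫ t in (0 : ℝ)..1,
          (n * R) ^ (b + 1 + a) * derivDeviation f L (b + 1 + a) (z + t • (y - z)) :=
        intervalIntegral.integral_mono_on zero_le_one
          ((hcont.sub continuous_const).abs.intervalIntegrable _ _)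
          ((hdev.const_mul _).intervalIntegrable _ _)
          fun t _ => abs_diffOpAt_dirSymbol_pow_mul_pow_sub_le f L _ hyz hv (b + 1) a
    _ = _ := by rw [intervalIntegral.integral_const_mul, intervalIntegral_segment_reverse]

lemma taylorDefect_one_eq_sub_sum (f : EuclideanSpace ℝ (Fin n) → ℝ)
    (L : MvPolynomial (Fin n) ℝ →ₗ[ℝ] ℝ) (k : ℕ) (x y z : EuclideanSpace ℝ (Fin n)) :
    taylorDefect f L 1 k x y = taylorDefect f L 1 k x z -
      ∑ a ∈ range k, taylorDefect f L (dirSymbol (x - y) ^ a) (k - a) y z / a.factorial := by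
  have hxz : dirSymbol (x - z) = dirSymbol (x - y) + dirSymbol (y - z) := by
    rw [← map_add, sub_add_sub_cancel]
  have hdiag := sum_range_diag_flip k fun a i =>
    diffOpAt f z (dirSymbol (y - z) ^ i * dirSymbol (x - y) ^ a) / i.factorial / a.factorial
  simp only [taylorDefect, mul_one, hxz, map_add_pow_div_factorial, hdiag, sub_div, sum_div,
    sum_sub_distrib, sum_range_succ _ k, Nat.sub_self, pow_zero, one_mul, Nat.factorial_zero,
    Nat.cast_one, div_one]
  ring

lemma abs_taylorDefect_one_le (L : MvPolynomial (Fin n) ℝ →ₗ[ℝ] ℝ) (hk : k ≠ 0)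
    (hf : ContDiff ℝ k f) {x y z : EuclideanSpace ℝ (Fin n)} {R : ℝ} (hxy : ‖x - y‖ ≤ R)
    (hxz : ‖x - z‖ ≤ R) (hyz : ‖y - z‖ ≤ R) :
    |taylorDefect f L 1 k x y| ≤
      (n * R) ^ k * ((∫ t in (0 : ℝ)..1, derivDeviation f L k (x + t • (z - x))) +
        k * ∫ t in (0 : ℝ)..1, derivDeviation f L k (y + t • (z - y))) := by
  have hx : |taylorDefect f L 1 k x z| ≤
      (n * R) ^ k * ∫ t in (0 : ℝ)..1, derivDeviation f L k (x + t • (z - x)) := by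
    simpa using abs_taylorDefect_dirSymbol_pow_le L (a := 0) hk hf hxy hxz
  have hy (a : ℕ) (ha : a ∈ range k) :
      |taylorDefect f L (dirSymbol (x - y) ^ a) (k - a) y z / a.factorial| ≤
        (n * R) ^ k * ∫ t in (0 : ℝ)..1, derivDeviation f L k (y + t • (z - y)) := by
    have hak : k - a + a = k := Nat.sub_add_cancel (mem_range.1 ha).le
    have h := abs_taylorDefect_dirSymbol_pow_le L (Nat.sub_ne_zero_of_lt (mem_range.1 ha))
      (by rwa [hak]) hxy hyz
    rw [abs_div, Nat.abs_cast]
    rw [hak] at h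
    exact (div_le_self (abs_nonneg _) (by exact_mod_cast a.factorial_pos)).trans h
  rw [taylorDefect_one_eq_sub_sum f L k x y z]
  refine (abs_sub _ _).trans ((add_le_add hx ((abs_sum_le_sum_abs _ _).trans
    (sum_le_sum hy))).trans_eq ?_)
  rw [sum_const, card_range, nsmul_eq_mul]
  ring

lemma taylorRem_succ_eq_taylorDefect_sub (f : EuclideanSpace ℝ (Fin n) → ℝ)
    (L : MvPolynomial (Fin n) ℝ →ₗ[ℝ] ℝ) (k : ℕ) (x y : EuclideanSpace ℝ (Fin n)) :
    taylorRem n (k + 1) f x y = taylorDefect f L 1 k x y -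
      (diffOpAt f y (dirSymbol (x - y) ^ k) - L (dirSymbol (x - y) ^ k)) / k.factorial := by
  simp only [taylorRem_eq_sub_sum_diffOpAt, taylorDefect, diffOpAt_one, mul_one, sum_range_succ]
  ring

lemma abs_taylorRem_succ_le (f : EuclideanSpace ℝ (Fin n) → ℝ)
    (L : MvPolynomial (Fin n) ℝ →ₗ[ℝ] ℝ) (k : ℕ) (x y : EuclideanSpace ℝ (Fin n)) :
    |taylorRem n (k + 1) f x y| ≤
      |taylorDefect f L 1 k x y| + (n * ‖x - y‖) ^ k * derivDeviation f L k y := by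
  have htop := abs_diffOpAt_dirSymbol_pow_mul_pow_sub_le f L y le_rfl le_rfl k 0 (v := x - y)
    (w := x - y)
  rw [pow_zero, mul_one, add_zero] at htop
  rw [taylorRem_succ_eq_taylorDefect_sub f L]
  refine (abs_sub _ _).trans (add_le_add_right ?_ _)
  rw [abs_div, Nat.abs_cast]
  exact (div_le_self (abs_nonneg _) (by exact_mod_cast k.factorial_pos)).trans htop

end SubstitutedTaylor

section SetAverages

variable {α F : Type*} [MeasurableSpace α] [NormedAddCommGroup F] {μ : Measure α} {s : Set α}
  {f : α → F}

lemma norm_setAverage_sub_le [NormedSpace ℝ F] [CompleteSpace F] (hs₀ : μ s ≠ 0) (hs : μ s ≠ ⊤)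
    (hf : IntegrableOn f s μ) (a : F) : ‖⨍ u in s, f u ∂μ - a‖ ≤ ⨍ u in s, ‖f u - a‖ ∂μ := by
  have hsub : ⨍ u in s, f u ∂μ - a = ⨍ u in s, (f u - a) ∂μ := by
    conv_lhs => rw [← setAverage_const hs₀ hs a]
    exact (integral_sub hf.to_average (integrableOn_const hs).to_average).symm
  rw [hsub]
  exact norm_integral_le_integral_norm _

lemma setAverage_norm_sub_le_add_norm (hs₀ : μ s ≠ 0) (hs : μ s ≠ ⊤) (hf : IntegrableOn f s μ)
    (a b : F) : ⨍ u in s, ‖f u - a‖ ∂μ ≤ ⨍ u in s, ‖f u - b‖ ∂μ + ‖b - a‖ := by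
  have hint (c : F) : IntegrableOn (fun u => ‖f u - c‖) s μ :=
    (hf.sub (integrableOn_const hs)).norm
  have hadd : ⨍ u in s, ‖f u - b‖ ∂μ + ‖b - a‖ = ⨍ u in s, (‖f u - b‖ + ‖b - a‖) ∂μ := by
    conv_lhs => rw [← setAverage_const hs₀ hs ‖b - a‖]
    exact (integral_add (hint b).to_average (integrableOn_const hs).to_average).symm
  rw [hadd]
  exact integral_mono (hint a).to_average ((hint b).add (integrableOn_const hs)).to_average
    fun u => norm_sub_le_norm_sub_add_norm_sub _ _ _

lemma integrableOn_ball [PseudoMetricSpace α] [ProperSpace α] (hf : LocallyIntegrable f μ)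
    (z : α) (ρ : ℝ) : IntegrableOn f (ball z ρ) μ :=
  (hf.integrableOn_isCompact (isCompact_closedBall z ρ)).mono_set ball_subset_closedBall

end SetAverages

section BallAverages

variable {E F : Type*} [NormedAddCommGroup E] [NormedSpace ℝ E] [FiniteDimensional ℝ E]
  [MeasurableSpace E] [BorelSpace E] [NormedAddCommGroup F] {μ : Measure E}
  [μ.IsAddHaarMeasure]

lemma measureReal_ball_mul (p : E) {t : ℝ} (ht : 0 < t) (R : ℝ) :
    μ.real (ball p (t * R)) = t ^ Module.finrank ℝ E * μ.real (ball p R) := by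
  rw [measureReal_def, Measure.addHaar_ball_mul_of_pos μ p ht, ENNReal.toReal_mul,
    ENNReal.toReal_ofReal (by positivity), Measure.addHaar_real_ball_center μ p, measureReal_def]

lemma setAverage_ball_le_pow_mul {g : E → ℝ} (hg : LocallyIntegrable g μ) (hg₀ : 0 ≤ g)
    {z z' : E} {ρ ρ' M : ℝ} (hρ' : 0 < ρ') (hM : ρ ≤ M * ρ') (hsub : ball z' ρ' ⊆ ball z ρ) :
    ⨍ u in ball z' ρ', g u ∂μ ≤ M ^ Module.finrank ℝ E * ⨍ u in ball z ρ, g u ∂μ := by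
  have hpos' : 0 < μ.real (ball z' ρ') :=
    ENNReal.toReal_pos (measure_ball_pos μ z' hρ').ne' measure_ball_lt_top.ne
  have hpos : 0 < μ.real (ball z ρ) := hpos'.trans_le (measureReal_mono hsub)
  have hMpos : 0 < M := by
    have hρ : 0 < ρ := by
      by_contra! h
      simp [ball_eq_empty.2 h] at hpos
    exact pos_of_mul_pos_left (hρ.trans_le hM) hρ'.le
  have hvol : μ.real (ball z ρ) ≤ M ^ Module.finrank ℝ E * μ.real (ball z' ρ') := by
    rw [← measureReal_ball_mul z' hMpos, Measure.addHaar_real_ball_center μ z,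
      Measure.addHaar_real_ball_center μ z']
    exact measureReal_mono (ball_subset_ball hM)
  rw [setAverage_eq, setAverage_eq, smul_eq_mul, smul_eq_mul, inv_mul_le_iff₀ hpos']
  calc ∫ u in ball z' ρ', g u ∂μ ≤ ∫ u in ball z ρ, g u ∂μ :=
        setIntegral_mono_set (integrableOn_ball hg z ρ) (Filter.Eventually.of_forall hg₀)
          hsub.eventuallyLE
    _ = μ.real (ball z ρ) * ((μ.real (ball z ρ))⁻¹ * ∫ u in ball z ρ, g u ∂μ) :=
        (mul_inv_cancel_left₀ hpos.ne' _).symm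
    _ ≤ M ^ Module.finrank ℝ E * μ.real (ball z' ρ') *
          ((μ.real (ball z ρ))⁻¹ * ∫ u in ball z ρ, g u ∂μ) := by
        gcongr
        exact mul_nonneg (inv_nonneg.2 hpos.le) (integral_nonneg hg₀)
    _ = _ := by ring

lemma setAverage_ball_comp_homothety [NormedSpace ℝ F] (S : E → F) (p : E) (R : ℝ) {t : ℝ}
    (ht : 0 < t) :
    ⨍ z in ball p R, S (p + t • (z - p)) ∂μ = ⨍ u in ball p (t * R), S u ∂μ := by
  have hleft : ∫ z in ball p R, S (p + t • (z - p)) ∂μ =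
      ∫ w in ball 0 R, S (p + t • w) ∂μ := by
    have hball : (fun z => z - p) ⁻¹' ball 0 R = ball p R := by ext; simp [dist_eq_norm]
    rw [← hball]
    exact (measurePreserving_sub_right μ p).setIntegral_preimage_emb
      (MeasurableEquiv.subRight p).measurableEmbedding (fun w => S (p + t • w)) _
  have hright : ∫ u in ball p (t * R), S u ∂μ = ∫ w in ball 0 (t * R), S (p + w) ∂μ := by
    have hball : (fun w => p + w) ⁻¹' ball p (t * R) = ball 0 (t * R) := by ext; simp
    rw [← hball]
    exact ((measurePreserving_add_left μ p).setIntegral_preimage_emb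
      (MeasurableEquiv.addLeft p).measurableEmbedding S _).symm
  rw [setAverage_eq, setAverage_eq, hleft, hright,
    Measure.setIntegral_comp_smul_of_pos μ (fun w => S (p + w)) _ ht, _root_.smul_ball ht.ne',
    smul_zero, Real.norm_of_nonneg ht.le, measureReal_ball_mul p ht, smul_smul, mul_inv,
    mul_comm (_⁻¹)]

lemma integrable_uncurry_homothety {S : E → F} (hS : Continuous S) (p : E) (R : ℝ) :
    Integrable (Function.uncurry fun (t : ℝ) (z : E) => S (p + t • (z - p)))
      ((volume.restrict (Set.uIoc 0 1)).prod (μ.restrict (ball p R))) := by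
  have hcont : Continuous (Function.uncurry fun (t : ℝ) (z : E) => S (p + t • (z - p))) := by
    unfold Function.uncurry
    fun_prop
  rw [Measure.prod_restrict]
  have hcompact : IsCompact (Set.uIcc (0 : ℝ) 1 ×ˢ closedBall p R) :=
    isCompact_uIcc.prod (isCompact_closedBall p R)
  exact (hcont.continuousOn.integrableOn_compact hcompact).mono_set
    (Set.prod_mono Set.uIoc_subset_uIcc ball_subset_closedBall)

lemma setAverage_ball_intervalIntegral_le {S : E → ℝ} (hS : Continuous S) (p : E) (R : ℝ)
    {h : ℝ → ℝ} (hh : IntervalIntegrable h volume 0 1)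
    (hle : ∀ t ∈ Set.Ioo 0 1, ⨍ u in ball p (t * R), S u ∂μ ≤ h t) :
    ⨍ z in ball p R, (∫ t in (0 : ℝ)..1, S (p + t • (z - p))) ∂μ ≤ ∫ t in (0 : ℝ)..1, h t := by
  have hint := integrable_uncurry_homothety (μ := μ) hS p R
  have hfubini : ⨍ z in ball p R, (∫ t in (0 : ℝ)..1, S (p + t • (z - p))) ∂μ =
      ∫ t in (0 : ℝ)..1, ⨍ z in ball p R, S (p + t • (z - p)) ∂μ := by
    simp only [setAverage_eq, intervalIntegral.integral_smul]
    rw [intervalIntegral_integral_swap hint]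
  have havg : IntervalIntegrable (fun t => ⨍ z in ball p R, S (p + t • (z - p)) ∂μ)
      volume 0 1 := by
    simp only [setAverage_eq, smul_eq_mul, intervalIntegrable_iff]
    exact hint.integral_prod_left.const_mul _
  rw [hfubini]
  refine intervalIntegral.integral_mono_on_of_le_Ioo zero_le_one havg hh fun t ht => ?_
  rw [setAverage_ball_comp_homothety S p R ht.1]
  exact hle t ht

lemma setAverage_ball_intervalIntegral_le_of_logb {S : E → ℝ} (hS : Continuous S) (p : E)
    (R : ℝ) {α β : ℝ}
    (hle : ∀ t ∈ Set.Ioo 0 1, ⨍ u in ball p (t * R), S u ∂μ ≤ α + β * Real.logb 2 t⁻¹) :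
    ⨍ z in ball p R, (∫ t in (0 : ℝ)..1, S (p + t • (z - p))) ∂μ ≤ α + β / Real.log 2 := by
  have hlog : IntervalIntegrable (fun t => Real.logb 2 t⁻¹) volume 0 1 := by
    simp only [Real.logb, Real.log_inv]
    exact intervalIntegral.intervalIntegrable_log'.neg.div_const _
  have hlog_integral : ∫ t in (0 : ℝ)..1, Real.logb 2 t⁻¹ = 1 / Real.log 2 := by
    simp [Real.logb, Real.log_inv, integral_log, neg_div]
  refine (setAverage_ball_intervalIntegral_le hS p R
    (intervalIntegrable_const.add (hlog.const_mul β)) hle).trans_eq ?_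
  rw [intervalIntegral.integral_add intervalIntegrable_const (hlog.const_mul β),
    intervalIntegral.integral_const_mul, hlog_integral]
  simp [div_eq_mul_inv]

end BallAverages

section BMO

lemma logb_two_mul_div {a b : ℝ} (ha : 0 < a) (hb : 0 < b) :
    Real.logb 2 (2 * a / b) = 1 + Real.logb 2 (a / b) := by
  rw [mul_div_assoc, Real.logb_mul two_ne_zero (div_pos ha hb).ne',
    Real.logb_self_eq_one one_lt_two]

variable {E F : Type*} [NormedAddCommGroup E] [MeasurableSpace E] [NormedAddCommGroup F]
  [NormedSpace ℝ F] {μ : Measure E} {f : E → F} {N : ℝ}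

/-- `‖f‖_* ≤ N` for the BMO seminorm over balls: every mean oscillation
`⨍_B ‖f - f_B‖` is at most `N`. Stated as a bound, so that no supremum that may be infinite
has to be taken in `ℝ`. -/
def BMOSeminormLE (μ : Measure E) (f : E → F) (N : ℝ) : Prop :=
  ∀ z ρ, 0 < ρ → ⨍ u in ball z ρ, ‖f u - ⨍ v in ball z ρ, f v ∂μ‖ ∂μ ≤ N

namespace BMOSeminormLE

lemma nonneg (hN : BMOSeminormLE μ f N) : 0 ≤ N :=
  (integral_nonneg fun _ => norm_nonneg _).trans (hN 0 1 one_pos)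

variable [NormedSpace ℝ E] [FiniteDimensional ℝ E] [BorelSpace E] [CompleteSpace F]
  [μ.IsAddHaarMeasure]

lemma norm_setAverage_ball_sub_le (hN : BMOSeminormLE μ f N) (hf : LocallyIntegrable f μ)
    {z z' : E} {ρ ρ' M : ℝ} (hρ' : 0 < ρ') (hM : ρ ≤ M * ρ') (hsub : ball z' ρ' ⊆ ball z ρ) :
    ‖⨍ u in ball z' ρ', f u ∂μ - ⨍ u in ball z ρ, f u ∂μ‖ ≤ M ^ Module.finrank ℝ E * N := by
  have hρ : 0 < ρ := nonempty_ball.1 ((nonempty_ball.2 hρ').mono hsub)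
  have hM₀ : 0 ≤ M := (pos_of_mul_pos_left (hρ.trans_le hM) hρ'.le).le
  have hosc : LocallyIntegrable (fun u => ‖f u - ⨍ v in ball z ρ, f v ∂μ‖) μ :=
    fun u => ((hf u).sub (locallyIntegrable_const _ u)).norm
  calc ‖⨍ u in ball z' ρ', f u ∂μ - ⨍ u in ball z ρ, f u ∂μ‖
      ≤ ⨍ u in ball z' ρ', ‖f u - ⨍ v in ball z ρ, f v ∂μ‖ ∂μ :=
        norm_setAverage_sub_le (measure_ball_pos μ z' hρ').ne' measure_ball_lt_top.ne
          (integrableOn_ball hf z' ρ') _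
    _ ≤ M ^ Module.finrank ℝ E * ⨍ u in ball z ρ, ‖f u - ⨍ v in ball z ρ, f v ∂μ‖ ∂μ :=
        setAverage_ball_le_pow_mul hosc (fun _ => norm_nonneg _) hρ' hM hsub
    _ ≤ M ^ Module.finrank ℝ E * N := by gcongr; exact hN z ρ hρ

lemma norm_setAverage_ball_sub_two_pow_le (hN : BMOSeminormLE μ f N)
    (hf : LocallyIntegrable f μ) (z : E) {ρ : ℝ} (hρ : 0 < ρ) (q : ℕ) :
    ‖⨍ u in ball z ρ, f u ∂μ - ⨍ u in ball z (2 ^ q * ρ), f u ∂μ‖ ≤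
      q * (2 ^ Module.finrank ℝ E * N) := by
  induction q with
  | zero => simp
  | succ q ih =>
    have hdouble : (2 : ℝ) ^ (q + 1) * ρ = 2 * (2 ^ q * ρ) := by ring
    have hpos : 0 < 2 ^ q * ρ := by positivity
    have hstep := hN.norm_setAverage_ball_sub_le hf (z := z) (z' := z) hpos hdouble.le
      (ball_subset_ball (by linarith))
    refine (norm_sub_le_norm_sub_add_norm_sub _ _ _).trans ((add_le_add ih hstep).trans_eq ?_)
    push_cast
    ring

lemma norm_setAverage_ball_sub_logb_le (hN : BMOSeminormLE μ f N) (hf : LocallyIntegrable f μ)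
    (z : E) {ρ ρ' : ℝ} (hρ : 0 < ρ) (hρρ' : ρ ≤ ρ') :
    ‖⨍ u in ball z ρ, f u ∂μ - ⨍ u in ball z ρ', f u ∂μ‖ ≤
      2 ^ Module.finrank ℝ E * N * (1 + Real.logb 2 (ρ' / ρ)) := by
  obtain ⟨q, hq, hq'⟩ := exists_nat_pow_near ((one_le_div hρ).2 hρρ') one_lt_two
  have hlog : (q : ℝ) ≤ Real.logb 2 (ρ' / ρ) := by
    rw [Real.le_logb_iff_rpow_le one_lt_two (div_pos (hρ.trans_le hρρ') hρ)]
    exact_mod_cast hq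
  rw [le_div_iff₀ hρ] at hq
  rw [div_lt_iff₀ hρ, pow_succ', mul_assoc] at hq'
  have hdyadic := hN.norm_setAverage_ball_sub_two_pow_le hf z hρ q
  have hlast := hN.norm_setAverage_ball_sub_le hf (z := z) (z' := z) (by positivity) hq'.le
    (ball_subset_ball hq)
  have hN₀ : 0 ≤ 2 ^ Module.finrank ℝ E * N := mul_nonneg (by positivity) hN.nonneg
  refine (norm_sub_le_norm_sub_add_norm_sub _ _ _).trans ((add_le_add hdyadic hlast).trans ?_)
  nlinarith [mul_le_mul_of_nonneg_right hlog hN₀]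

lemma setAverage_ball_norm_sub_le (hN : BMOSeminormLE μ f N) (hf : LocallyIntegrable f μ)
    {x₀ p : E} {r R t : ℝ} (hr : 0 < r) (hrR : r ≤ R) (hp : dist p x₀ ≤ R) (ht : 0 < t)
    (ht' : t ≤ 1) :
    ⨍ u in ball p (t * R), ‖f u - ⨍ v in ball x₀ r, f v ∂μ‖ ∂μ ≤
      2 ^ Module.finrank ℝ E * N * (5 + Real.logb 2 (R / r)) +
        2 ^ Module.finrank ℝ E * N * Real.logb 2 t⁻¹ := by
  have hR : 0 < R := hr.trans_le hrR
  have htR : 0 < t * R := mul_pos ht hR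
  have hosc : ⨍ u in ball p (t * R), ‖f u - ⨍ v in ball p (t * R), f v ∂μ‖ ∂μ ≤
      2 ^ Module.finrank ℝ E * N :=
    (hN p _ htR).trans (le_mul_of_one_le_left hN.nonneg (one_le_pow₀ one_le_two))
  have hgrow := hN.norm_setAverage_ball_sub_logb_le hf p htR (mul_le_of_le_one_left hR.le ht')
  have hmove := hN.norm_setAverage_ball_sub_le hf (z := x₀) (z' := p) (M := 2) hR le_rfl
    (ball_subset_ball' (by linarith))
  have hshrink := hN.norm_setAverage_ball_sub_logb_le hf x₀ hr (by linarith : r ≤ 2 * R)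
  have ht_div : R / (t * R) = t⁻¹ := by field_simp
  rw [ht_div] at hgrow
  rw [logb_two_mul_div hR hr, norm_sub_rev] at hshrink
  have hcenter := norm_add₃_le.trans (add_le_add_three hgrow hmove hshrink)
  rw [sub_add_sub_cancel, sub_add_sub_cancel] at hcenter
  refine (setAverage_norm_sub_le_add_norm (measure_ball_pos μ p htR).ne' measure_ball_lt_top.ne
    (integrableOn_ball hf p _) _ _).trans ((add_le_add hosc hcenter).trans_eq ?_)
  ring

end BMOSeminormLE

end BMO

section BMODerivatives

open MvPolynomial Finset

variable {n k : ℕ} {f : EuclideanSpace ℝ (Fin n) → ℝ}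

lemma ballAvg_eq_setAverage (f : EuclideanSpace ℝ (Fin n) → ℝ) (x₀ : EuclideanSpace ℝ (Fin n))
    (r : ℝ) : ballAvg n f x₀ r = ⨍ u in ball x₀ r, f u :=
  (setAverage_eq volume f (ball x₀ r)).symm

lemma bmoSeminormLE_iff_ballAvg {g : EuclideanSpace ℝ (Fin n) → ℝ} {M : ℝ} :
    BMOSeminormLE volume g M ↔ ∀ (z : EuclideanSpace ℝ (Fin n)) (ρ : ℝ), 0 < ρ →
      (volume (ball z ρ)).toReal⁻¹ * ∫ u in ball z ρ, |g u - ballAvg n g z ρ| ≤ M := by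
  simp only [BMOSeminormLE, ← ballAvg_eq_setAverage]
  rfl

/-- The functional on symbols with value `(Dᵞf)_{B(x₀,r)}` at `Xᵞ`; it supplies the prescribed
top-order derivatives for `derivDeviation` and `taylorDefect`. -/
noncomputable def ballAvgFunctional (f : EuclideanSpace ℝ (Fin n) → ℝ)
    (x₀ : EuclideanSpace ℝ (Fin n)) (r : ℝ) : MvPolynomial (Fin n) ℝ →ₗ[ℝ] ℝ :=
  monomialFunctional fun γ => ballAvg n (mderiv n γ f) x₀ r

lemma derivDeviation_ballAvgFunctional (f : EuclideanSpace ℝ (Fin n) → ℝ)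
    (x₀ : EuclideanSpace ℝ (Fin n)) (r : ℝ) (k : ℕ) (u : EuclideanSpace ℝ (Fin n)) :
    derivDeviation f (ballAvgFunctional f x₀ r) k u =
      ∑ γ ∈ piAntidiag univ k, |mderiv n γ f u - ballAvg n (mderiv n γ f) x₀ r| := by
  simp only [derivDeviation, ballAvgFunctional, monomialFunctional_prod_X_pow]

variable {N : (Fin n → ℕ) → ℝ} {x₀ : EuclideanSpace ℝ (Fin n)} {r : ℝ}

lemma setAverage_derivDeviation_le (hf : ContDiff ℝ k f)
    (hN : ∀ γ ∈ piAntidiag univ k, BMOSeminormLE volume (mderiv n γ f) (N γ)) (hr : 0 < r)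
    {p : EuclideanSpace ℝ (Fin n)} {R t : ℝ} (hrR : r ≤ R) (hp : dist p x₀ ≤ R) (ht : 0 < t)
    (ht' : t ≤ 1) :
    ⨍ u in ball p (t * R), derivDeviation f (ballAvgFunctional f x₀ r) k u ≤
      2 ^ n * (∑ γ ∈ piAntidiag univ k, N γ) * (5 + Real.logb 2 (R / r)) +
        2 ^ n * (∑ γ ∈ piAntidiag univ k, N γ) * Real.logb 2 t⁻¹ := by
  have hcont (γ : Fin n → ℕ) (hγ : γ ∈ piAntidiag univ k) : Continuous (mderiv n γ f) :=
    continuous_mderiv γ (by rwa [(mem_piAntidiag.1 hγ).1])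
  have hint (γ : Fin n → ℕ) (hγ : γ ∈ piAntidiag univ k) : IntegrableOn
      (fun u => |mderiv n γ f u - ⨍ v in ball x₀ r, mderiv n γ f v|) (ball p (t * R)) :=
    integrableOn_ball ((hcont γ hγ).sub continuous_const).abs.locallyIntegrable p _
  simp only [derivDeviation_ballAvgFunctional, ballAvg_eq_setAverage]
  refine (integral_finsetSum _ fun γ hγ => (hint γ hγ).to_average).trans_le ?_
  simp only [mul_sum, sum_mul, ← sum_add_distrib]
  refine sum_le_sum fun γ hγ => ?_
  have h := (hN γ hγ).setAverage_ball_norm_sub_le (hcont γ hγ).locallyIntegrable hr hrR hp ht ht'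
  rw [finrank_euclideanSpace_fin] at h
  exact h

lemma setAverage_intervalIntegral_derivDeviation_le (hf : ContDiff ℝ k f)
    (hN : ∀ γ ∈ piAntidiag univ k, BMOSeminormLE volume (mderiv n γ f) (N γ)) (hr : 0 < r)
    {p : EuclideanSpace ℝ (Fin n)} {R : ℝ} (hrR : r ≤ R) (hp : dist p x₀ ≤ R) :
    ⨍ z in ball p R,
        (∫ t in (0 : ℝ)..1, derivDeviation f (ballAvgFunctional f x₀ r) k (p + t • (z - p))) ≤
      2 ^ n * (∑ γ ∈ piAntidiag univ k, N γ) * (7 + Real.logb 2 (R / r)) := by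
  have hN₀ : 0 ≤ 2 ^ n * ∑ γ ∈ piAntidiag univ k, N γ :=
    mul_nonneg (by positivity) (sum_nonneg fun γ hγ => (hN γ hγ).nonneg)
  have hlog : (Real.log 2)⁻¹ ≤ 2 := by
    rw [inv_le_comm₀ (Real.log_pos one_lt_two) two_pos]
    linarith [Real.log_two_gt_d9]
  refine (setAverage_ball_intervalIntegral_le_of_logb (continuous_derivDeviation _ hf) p R
    fun t ht => setAverage_derivDeviation_le hf hN hr hrR hp ht.1 ht.2.le).trans ?_
  rw [div_eq_mul_inv (_ * _), ← mul_add]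
  exact mul_le_mul_of_nonneg_left (by linarith) hN₀

lemma continuous_intervalIntegral_homothety {S : EuclideanSpace ℝ (Fin n) → ℝ}
    (hS : Continuous S) (p : EuclideanSpace ℝ (Fin n)) :
    Continuous fun z => ∫ t in (0 : ℝ)..1, S (p + t • (z - p)) := by
  refine intervalIntegral.continuous_parametric_intervalIntegral_of_continuous' ?_ 0 1
  unfold Function.uncurry
  fun_prop

lemma setAverage_ball_intervalIntegral_derivDeviation_le (hf : ContDiff ℝ k f)
    (hN : ∀ γ ∈ piAntidiag univ k, BMOSeminormLE volume (mderiv n γ f) (N γ)) (hr : 0 < r)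
    {p : EuclideanSpace ℝ (Fin n)} {ρ : ℝ} (hrρ : r ≤ ρ) (hp : p ∈ ball x₀ ρ) :
    ⨍ z in ball x₀ ρ,
        (∫ t in (0 : ℝ)..1, derivDeviation f (ballAvgFunctional f x₀ r) k (p + t • (z - p))) ≤
      4 ^ n * (∑ γ ∈ piAntidiag univ k, N γ) * (8 + Real.logb 2 (ρ / r)) := by
  have hρ : 0 < ρ := hr.trans_le hrρ
  have hpρ : dist p x₀ < ρ := mem_ball.1 hp
  have hdouble := setAverage_ball_le_pow_mul (μ := volume) (M := 2) (z := p)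
    (continuous_intervalIntegral_homothety
      (continuous_derivDeviation (ballAvgFunctional f x₀ r) hf) p).locallyIntegrable
    (fun _ => intervalIntegral.integral_nonneg zero_le_one fun _ _ =>
      sum_nonneg fun _ _ => abs_nonneg _)
    hρ le_rfl (ball_subset_ball' (by linarith [dist_comm p x₀]) : ball x₀ ρ ⊆ ball p (2 * ρ))
  have haround := setAverage_intervalIntegral_derivDeviation_le hf hN hr (p := p) (x₀ := x₀)
    (by linarith : r ≤ 2 * ρ) (by linarith)
  have hpow : (4 : ℝ) ^ n = 2 ^ n * 2 ^ n := by rw [← mul_pow]; norm_num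
  rw [finrank_euclideanSpace_fin] at hdouble
  refine (hdouble.trans (mul_le_mul_of_nonneg_left haround (by positivity))).trans_eq ?_
  rw [logb_two_mul_div hρ hr, hpow]
  ring

lemma abs_taylorDefect_ballAvgFunctional_le (hk : k ≠ 0) (hf : ContDiff ℝ k f)
    (hN : ∀ γ ∈ piAntidiag univ k, BMOSeminormLE volume (mderiv n γ f) (N γ)) (hr : 0 < r)
    {x y : EuclideanSpace ℝ (Fin n)} {ρ : ℝ} (hrρ : r ≤ ρ) (hx : x ∈ ball x₀ ρ)
    (hy : y ∈ ball x₀ ρ) :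
    |taylorDefect f (ballAvgFunctional f x₀ r) 1 k x y| ≤
      (n * (2 * ρ)) ^ k * ((k + 1) *
        (4 ^ n * (∑ γ ∈ piAntidiag univ k, N γ) * (8 + Real.logb 2 (ρ / r)))) := by
  have hρ : 0 < ρ := hr.trans_le hrρ
  set S := derivDeviation f (ballAvgFunctional f x₀ r) k
  let I (p z : EuclideanSpace ℝ (Fin n)) : ℝ := ∫ t in (0 : ℝ)..1, S (p + t • (z - p))
  have hI (p : EuclideanSpace ℝ (Fin n)) : IntegrableOn (I p) (ball x₀ ρ) :=
    integrableOn_ball (continuous_intervalIntegral_homothety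
      (continuous_derivDeviation _ hf) p).locallyIntegrable x₀ ρ
  obtain ⟨z, hz, hle⟩ := exists_le_setAverage (measure_ball_pos volume x₀ hρ).ne'
    measure_ball_lt_top.ne ((hI x).add ((hI y).const_mul k))
  have havg : ⨍ z in ball x₀ ρ, (I x z + k * I y z) ≤
      (k + 1) * (4 ^ n * (∑ γ ∈ piAntidiag univ k, N γ) * (8 + Real.logb 2 (ρ / r))) := by
    have hIx := setAverage_ball_intervalIntegral_derivDeviation_le hf hN hr hrρ hx
    have hIy := setAverage_ball_intervalIntegral_derivDeviation_le hf hN hr hrρ hy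
    have hadd : ⨍ z in ball x₀ ρ, (I x z + k * I y z) =
        (⨍ z in ball x₀ ρ, I x z) + k * ⨍ z in ball x₀ ρ, I y z :=
      (integral_add (hI x).to_average ((hI y).const_mul k).to_average).trans
        (congrArg _ (integral_const_mul _ _))
    rw [hadd]
    linarith [mul_le_mul_of_nonneg_left hIy k.cast_nonneg]
  have hdist {u v : EuclideanSpace ℝ (Fin n)} (hu : u ∈ ball x₀ ρ) (hv : v ∈ ball x₀ ρ) :
      ‖u - v‖ ≤ 2 * ρ := by
    rw [← dist_eq_norm]
    linarith [dist_triangle_right u v x₀, mem_ball.1 hu, mem_ball.1 hv]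
  refine (abs_taylorDefect_one_le _ hk hf (hdist hx hy) (hdist hx hz) (hdist hy hz)).trans ?_
  gcongr
  exact hle.trans havg

lemma two_pow_mul_le_two_mul_dist {α : Type*} [PseudoMetricSpace α] {x₀ x y : α} {r : ℝ} {j : ℕ}
    (hj : 1 ≤ j) (hx : x ∈ ball x₀ r) (hy : y ∉ ball x₀ (2 ^ j * r)) :
    2 ^ j * r ≤ 2 * dist x y := by
  have hr : 0 < r := pos_of_mem_ball hx
  have hpow : (2 : ℝ) ≤ 2 ^ j := le_self_pow₀ one_le_two (by omega)
  have hfar : 2 ^ j * r ≤ dist y x₀ := not_lt.1 hy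
  nlinarith [dist_triangle_left y x₀ x, mem_ball.1 hx]

lemma abs_taylorRem_succ_le_of_bmoSeminormLE (hk : k ≠ 0) (hf : ContDiff ℝ k f)
    (hN : ∀ γ ∈ piAntidiag univ k, BMOSeminormLE volume (mderiv n γ f) (N γ)) (hr : 0 < r)
    {j : ℕ} (hj : 1 ≤ j) {x y : EuclideanSpace ℝ (Fin n)} (hx : x ∈ ball x₀ r)
    (hy : y ∈ ball x₀ (2 ^ (j + 1) * r) \ ball x₀ (2 ^ j * r)) :
    |taylorRem n (k + 1) f x y| ≤ ((8 * n) ^ k * ((k + 1) * (4 ^ n * 10)) + n ^ k + 1) *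
      ‖x - y‖ ^ k * (j * ∑ γ ∈ piAntidiag univ k, N γ +
        ∑ γ ∈ piAntidiag univ k, |mderiv n γ f y - ballAvg n (mderiv n γ f) x₀ r|) := by
  rw [← derivDeviation_ballAvgFunctional]
  set Λ := ∑ γ ∈ piAntidiag univ k, N γ
  set S := derivDeviation f (ballAvgFunctional f x₀ r) k y
  have hΛ : 0 ≤ Λ := sum_nonneg fun γ hγ => (hN γ hγ).nonneg
  have hS : 0 ≤ S := sum_nonneg fun _ _ => abs_nonneg _
  have hj' : (1 : ℝ) ≤ j := by exact_mod_cast hj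
  have hrρ : r ≤ 2 ^ (j + 1) * r := le_mul_of_one_le_left hr.le (one_le_pow₀ one_le_two)
  have hsep : 2 * (2 ^ (j + 1) * r) ≤ 8 * ‖x - y‖ := by
    have h := two_pow_mul_le_two_mul_dist hj hx hy.2
    rw [← dist_eq_norm, pow_succ', mul_assoc]
    linarith
  have hlog : Real.logb 2 (2 ^ (j + 1) * r / r) = j + 1 := by
    rw [mul_div_cancel_right₀ _ hr.ne', Real.logb_pow, Real.logb_self_eq_one one_lt_two]
    simp
  have hdefect : |taylorDefect f (ballAvgFunctional f x₀ r) 1 k x y| ≤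
      (n * (8 * ‖x - y‖)) ^ k * ((k + 1) * (4 ^ n * Λ * (10 * j))) := by
    refine (abs_taylorDefect_ballAvgFunctional_le hk hf hN hr hrρ (ball_subset_ball hrρ hx)
      hy.1).trans ?_
    rw [hlog]
    gcongr
    linarith
  calc |taylorRem n (k + 1) f x y|
      ≤ (n * (8 * ‖x - y‖)) ^ k * ((k + 1) * (4 ^ n * Λ * (10 * j))) + (n * ‖x - y‖) ^ k * S :=
        (abs_taylorRem_succ_le f _ k x y).trans (add_le_add_left hdefect _)
    _ = (8 * n) ^ k * ((k + 1) * (4 ^ n * 10)) * ‖x - y‖ ^ k * (j * Λ) +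
          n ^ k * ‖x - y‖ ^ k * S := by simp only [mul_pow]; ring
    _ ≤ ((8 * n) ^ k * ((k + 1) * (4 ^ n * 10)) + n ^ k + 1) * ‖x - y‖ ^ k * (j * Λ) +
          ((8 * n) ^ k * ((k + 1) * (4 ^ n * 10)) + n ^ k + 1) * ‖x - y‖ ^ k * S := by
        have hA : (0 : ℝ) ≤ (8 * n) ^ k * ((k + 1) * (4 ^ n * 10)) := by positivity
        have hB : (0 : ℝ) ≤ n ^ k := by positivity
        gcongr <;> linarith
    _ = _ := by ring

end BMODerivatives

theorem stmt14_general (n m : ℕ) (hm : 2 ≤ m) :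
    ∃ C : ℝ, 0 < C ∧
      ∀ (A : EuclideanSpace ℝ (Fin n) → ℝ), ContDiff ℝ (m - 1 : ℕ) A →
      ∀ (N : (Fin n → Fin m) → ℝ),
      (∀ γ : Fin n → Fin m, (∑ i, (γ i : ℕ)) = m - 1 →
        ∀ (z : EuclideanSpace ℝ (Fin n)) (ρ : ℝ), 0 < ρ →
          (volume (ball z ρ)).toReal⁻¹ *
            ∫ u in ball z ρ,
              |mderiv n (fun i => (γ i : ℕ)) A u -
                ballAvg n (mderiv n (fun i => (γ i : ℕ)) A) z ρ| ≤ N γ) →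
      ∀ (x₀ : EuclideanSpace ℝ (Fin n)) (r : ℝ), 0 < r → ∀ j : ℕ, 1 ≤ j →
      ∀ x ∈ ball x₀ r,
      ∀ y ∈ ball x₀ (2 ^ (j + 1) * r) \ ball x₀ (2 ^ j * r),
        |taylorRem n m A x y| ≤ C * ‖x - y‖ ^ (m - 1) *
          ((j : ℝ) * (∑ γ : Fin n → Fin m,
              if (∑ i, (γ i : ℕ)) = m - 1 then N γ else 0) +
            ∑ γ : Fin n → Fin m,
              if (∑ i, (γ i : ℕ)) = m - 1 then
                |mderiv n (fun i => (γ i : ℕ)) A y -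
                  ballAvg n (mderiv n (fun i => (γ i : ℕ)) A) x₀ r|
              else 0) := by
  obtain ⟨k, rfl⟩ : ∃ k, m = k + 1 := ⟨m - 1, by omega⟩
  rw [Nat.add_sub_cancel]
  refine ⟨(8 * n) ^ k * ((k + 1) * (4 ^ n * 10)) + n ^ k + 1, by positivity,
    fun A hA N hN x₀ r hr j hj x hx y hy => ?_⟩
  let N' (γ : Fin n → ℕ) : ℝ := N fun i => Fin.ofNat (k + 1) (γ i)
  have hN'N (γ : Fin n → Fin (k + 1)) : N' (fun i => γ i) = N γ := by
    simp only [N', Fin.ofNat_val_eq_self]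
  have hbmo (γ : Fin n → ℕ) (hγ : γ ∈ Finset.piAntidiag Finset.univ k) :
      BMOSeminormLE volume (mderiv n γ A) (N' γ) := by
    obtain ⟨δ, rfl⟩ := exists_fin_val_eq_of_mem_piAntidiag k.lt_succ_self hγ
    rw [hN'N, bmoSeminormLE_iff_ballAvg]
    exact hN δ (Finset.mem_piAntidiag.1 hγ).1
  have hsumN := sum_ite_sum_eq_sum_piAntidiag k.lt_succ_self N'
  have hsumDev := sum_ite_sum_eq_sum_piAntidiag k.lt_succ_self fun γ : Fin n → ℕ =>
    |mderiv n γ A y - ballAvg n (mderiv n γ A) x₀ r|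
  simp only [hN'N] at hsumN
  rw [hsumN, hsumDev]
  exact abs_taylorRem_succ_le_of_bmoSeminormLE (by omega) hA hbmo hr hj hx hy

/-- Let `m ≥ 2` and suppose all `D^γ A` with `|γ| = m-1` lie in
`BMO(ℝⁿ)`, with `‖D^γ A‖_* ≤ N γ`. Then there is `C > 0`, independent of
`x, y, j, r, A`, such that for `x ∈ B(x₀,r)` and
`y ∈ B(x₀,2^{j+1}r) \ B(x₀,2^j r)` (`j ≥ 1`),
`|R_m(A;x,y)| ≤ C |x-y|^{m-1} (j ∑_{|γ|=m-1} N γ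
  + ∑_{|γ|=m-1} |D^γ A(y) - (D^γ A)_{B(x₀,r)}|)`. -/
theorem stmt14 (n m : ℕ) (hn : 0 < n) (hm : 2 ≤ m) :
    ∃ C : ℝ, 0 < C ∧
      ∀ (A : EuclideanSpace ℝ (Fin n) → ℝ), ContDiff ℝ m A →
      ∀ (N : (Fin n → Fin m) → ℝ),
      (∀ γ : Fin n → Fin m, (∑ i, (γ i : ℕ)) = m - 1 →
        0 ≤ N γ ∧
        -- `‖D^γ A‖_* ≤ N γ`: BMO seminorm bound
        ∀ (z : EuclideanSpace ℝ (Fin n)) (ρ : ℝ), 0 < ρ →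
          (volume (ball z ρ)).toReal⁻¹ *
            ∫ u in ball z ρ,
              |mderiv n (fun i => (γ i : ℕ)) A u -
                ballAvg n (mderiv n (fun i => (γ i : ℕ)) A) z ρ| ≤ N γ) →
      ∀ (x₀ : EuclideanSpace ℝ (Fin n)) (r : ℝ), 0 < r → ∀ j : ℕ, 1 ≤ j →
      ∀ x ∈ ball x₀ r,
      ∀ y ∈ ball x₀ (2 ^ (j + 1) * r) \ ball x₀ (2 ^ j * r),
        |taylorRem n m A x y| ≤ C * ‖x - y‖ ^ (m - 1) *
          ((j : ℝ) * (∑ γ : Fin n → Fin m,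
              if (∑ i, (γ i : ℕ)) = m - 1 then N γ else 0) +
            ∑ γ : Fin n → Fin m,
              if (∑ i, (γ i : ℕ)) = m - 1 then
                |mderiv n (fun i => (γ i : ℕ)) A y -
                  ballAvg n (mderiv n (fun i => (γ i : ℕ)) A) x₀ r|
              else 0) := by
  obtain ⟨C, hC, h⟩ := stmt14_general n m hm
  exact ⟨C, hC, fun A hA N hN => h A (hA.of_le (by exact_mod_cast m.sub_le 1)) N
    fun γ hγ => (hN γ hγ).2⟩
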